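/- Let (f¹, g¹) and (f², g²) be pairs of càdlàg functions from [0,∞) to ℝ such that, for i = 1, 2: Δfⁱ(t) ≥ 0 for every t > 0, gⁱ is strictly increasing, and fⁱ(0) + gⁱ(0) ≥ 0. Suppose f¹(t) ≤ f²(t) and g¹(t) ≤ g²(t) for all t ≥ 0. If, for i = 1, 2, hⁱ is a solution of the time-change equation TCE(fⁱ, gⁱ) with associated cⁱ(t) = Leb({s ∈ [0,t] : hⁱ(s) > 0}), then c¹(t) ≤ c²(t) for all t ≥ 0. -/

import Mathlib

/-!
Write `c = posTime h` for the time change of a solution `h`, and `c₁`, `c₂` for those of `h₁`, `h₂`.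
Time changes are nondecreasing, `1`-Lipschitz and vanish at `0`.

*A solution never becomes negative.* While `h ≤ 0` the time change stands still, so `h` increases
with `g`; when `c` moves, the nonnegative jumps of `f` and the monotonicity of `g` only let `h`
decrease continuously. Hence `h` cannot pass from `[0, ∞)` to `(-∞, 0)` (`TCESol.nonneg`).

*Comparison.* Suppose `c₂ t < c₁ t` and let `σ` be the last time before `t` with `c₁ σ ≤ c₂ σ`.
For `b ∈ (σ, t]` the intermediate value theorem gives `a < b` with `c₁ a = c₂ b`, so
`h₂ b = f₂ (c₂ b) + g₂ b > f₂ (c₁ a) + g₂ a ≥ f₁ (c₁ a) + g₁ a = h₁ a ≥ 0`.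
Thus `c₂` runs at full speed on `(σ, t]`, and `c₁`, which never runs faster, cannot overtake it.
-/

open MeasureTheory Set Function Filter Topology

/-- `f : ℝ → ℝ` is càdlàg on `[0,∞)`: right-continuous at every `t ≥ 0`
and with left limits at every `t > 0`. -/
def CadlagOn (f : ℝ → ℝ) : Prop :=
  (∀ t : ℝ, 0 ≤ t → ContinuousWithinAt f (Ici t) t) ∧
  (∀ t : ℝ, 0 < t → ∃ L : ℝ, Filter.Tendsto f (nhdsWithin t (Iio t)) (nhds L))

/-- `f` has non-negative jumps on `(0,∞)`: `Δf(t) = f t − f(t−) ≥ 0`. -/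
def NonnegJumps (f : ℝ → ℝ) : Prop :=
  ∀ t : ℝ, 0 < t → Function.leftLim f t ≤ f t

/-- `Leb({s ∈ [0,t] : h(s) > 0})`. -/
noncomputable def posTime (h : ℝ → ℝ) (t : ℝ) : ℝ :=
  (volume {s ∈ Icc (0:ℝ) t | 0 < h s}).toReal

/-- `Leb({s ∈ [0,t] : h(s) = 0})`. -/
noncomputable def zeroTime (h : ℝ → ℝ) (t : ℝ) : ℝ :=
  (volume {s ∈ Icc (0:ℝ) t | h s = 0}).toReal

/-- `h` is a solution of the time-change equation `TCE(f,g)`: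
`h` is measurable on `[0,∞)` and `h(t) = f(c(t)) + g(t)` for all `t ≥ 0`,
where `c(t) = Leb({s ∈ [0,t] : h(s) > 0})`. -/
def TCESol (f g h : ℝ → ℝ) : Prop :=
  Measurable ((Ici (0:ℝ)).restrict h) ∧
  ∀ t : ℝ, 0 ≤ t → h t = f (posTime h t) + g t

lemma posSet_volume_ne_top (h : ℝ → ℝ) (t : ℝ) :
    volume {s ∈ Icc (0:ℝ) t | 0 < h s} ≠ ⊤ :=
  ne_top_of_le_ne_top (by simp) (measure_mono (sep_subset (Icc (0:ℝ) t) _))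

lemma posTime_nonneg (h : ℝ → ℝ) (t : ℝ) : 0 ≤ posTime h t := ENNReal.toReal_nonneg

lemma posTime_zero (h : ℝ → ℝ) : posTime h 0 = 0 := by
  have : volume {s ∈ Icc (0:ℝ) 0 | 0 < h s} = 0 :=
    measure_mono_null (sep_subset _ _) (by simp)
  rw [posTime, this, ENNReal.toReal_zero]

lemma posTime_mono (h : ℝ → ℝ) : Monotone (posTime h) := by
  intro s t hst
  refine ENNReal.toReal_mono (posSet_volume_ne_top h t) (measure_mono ?_)
  rintro x ⟨⟨hx0, hxs⟩, hx⟩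
  exact ⟨⟨hx0, hxs.trans hst⟩, hx⟩

lemma posTime_le_add (h : ℝ → ℝ) {s t : ℝ} (hst : s ≤ t) :
    posTime h t ≤ posTime h s + (t - s) := by
  have hsub : {x ∈ Icc (0:ℝ) t | 0 < h x} ⊆ {x ∈ Icc (0:ℝ) s | 0 < h x} ∪ Ioc s t := by
    rintro x ⟨⟨hx0, hxt⟩, hx⟩
    rcases le_or_gt x s with hxs | hxs
    · exact Or.inl ⟨⟨hx0, hxs⟩, hx⟩
    · exact Or.inr ⟨hxs, hxt⟩
  have hle := (measure_mono (μ := volume) hsub).trans (measure_union_le _ _)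
  have := ENNReal.toReal_mono
    (ENNReal.add_ne_top.2 ⟨posSet_volume_ne_top h s, by simp⟩) hle
  rw [ENNReal.toReal_add (posSet_volume_ne_top h s) (by simp), Real.volume_Ioc,
    ENNReal.toReal_ofReal (sub_nonneg.2 hst)] at this
  exact this

lemma posTime_continuous (h : ℝ → ℝ) : Continuous (posTime h) := by
  have : LipschitzWith 1 (posTime h) := by
    refine LipschitzWith.of_le_add fun x y => ?_
    rw [Real.dist_eq]
    rcases le_total x y with hxy | hxy
    · linarith [posTime_mono h hxy, abs_nonneg (x - y)]
    · linarith [posTime_le_add h hxy, le_abs_self (x - y)]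
  exact this.continuous

lemma posTime_eq_of_nonpos {h : ℝ → ℝ} {s t : ℝ} (hst : s ≤ t)
    (hneg : ∀ x ∈ Ioc s t, h x ≤ 0) : posTime h t = posTime h s := by
  have : {x ∈ Icc (0:ℝ) t | 0 < h x} = {x ∈ Icc (0:ℝ) s | 0 < h x} := by
    ext x
    constructor
    · rintro ⟨⟨hx0, hxt⟩, hx⟩
      refine ⟨⟨hx0, ?_⟩, hx⟩
      by_contra! hsx
      exact absurd hx (hneg x ⟨hsx, hxt⟩).not_gt
    · rintro ⟨⟨hx0, hxs⟩, hx⟩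
      exact ⟨⟨hx0, hxs.trans hst⟩, hx⟩
  simp only [posTime, this]

lemma add_le_posTime_of_pos {h : ℝ → ℝ} {s t : ℝ} (hs : 0 ≤ s) (hst : s ≤ t)
    (hpos : ∀ x ∈ Ioc s t, 0 < h x) : posTime h s + (t - s) ≤ posTime h t := by
  have hsub : {x ∈ Icc (0:ℝ) s | 0 < h x} ∪ Ioc s t ⊆ {x ∈ Icc (0:ℝ) t | 0 < h x} := by
    rintro x (⟨⟨hx0, hxs⟩, hx⟩ | hx)
    · exact ⟨⟨hx0, hxs.trans hst⟩, hx⟩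
    · exact ⟨⟨hs.trans hx.1.le, hx.2⟩, hpos x hx⟩
  have hdisj : Disjoint {x ∈ Icc (0:ℝ) s | 0 < h x} (Ioc s t) :=
    Set.disjoint_left.2 fun x hx hx' => hx.1.2.not_gt hx'.1
  have hle := measure_mono (μ := volume) hsub
  rw [measure_union hdisj measurableSet_Ioc] at hle
  have := ENNReal.toReal_mono (posSet_volume_ne_top h t) hle
  rw [ENNReal.toReal_add (posSet_volume_ne_top h s) (by simp), Real.volume_Ioc,
    ENNReal.toReal_ofReal (sub_nonneg.2 hst)] at this
  exact this

/-- If `h t < 0`, let `s` be the supremum of the times in `[0, t]` at which `h ≥ 0`. The time change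
is constant on `[s, t]`, so `h s ≤ h t < 0`; but times `r < s` with `h r ≥ 0` accumulate at `s`,
and a downward crossing at `s` would need a negative jump of `f`. -/
lemma TCESol.nonneg {f g h : ℝ → ℝ} (hf : CadlagOn f) (hjump : NonnegJumps f)
    (hg : MonotoneOn g (Ici 0)) (h0 : 0 ≤ f 0 + g 0) (hsol : TCESol f g h)
    {t : ℝ} (ht : 0 ≤ t) : 0 ≤ h t := by
  by_contra! hneg
  set S : Set ℝ := {s ∈ Icc (0:ℝ) t | 0 ≤ h s} with hS
  have hS0 : (0:ℝ) ∈ S := by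
    refine ⟨⟨le_rfl, ht⟩, ?_⟩
    rw [hsol.2 0 le_rfl, posTime_zero]
    exact h0
  have hbdd : BddAbove S := ⟨t, fun x hx => hx.1.2⟩
  set s := sSup S
  have hs0 : 0 ≤ s := le_csSup hbdd hS0
  have hst : s ≤ t := csSup_le ⟨0, hS0⟩ fun x hx => hx.1.2
  have hlt : ∀ x ∈ Ioc s t, h x ≤ 0 := by
    intro x hx
    by_contra! hx'
    exact (le_csSup hbdd ⟨⟨hs0.trans hx.1.le, hx.2⟩, hx'.le⟩).not_gt hx.1
  have hceq := posTime_eq_of_nonpos hst hlt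
  have hfs : f (posTime h s) < -g s := by
    have h1 := hsol.2 t ht
    rw [hceq] at h1
    linarith [hg hs0 ht hst]
  -- Nonnegative jumps propagate the strict inequality to the left of `posTime h s`.
  have hev : ∃ l < posTime h s, ∀ x, 0 ≤ x → l < x → x ≤ posTime h s → f x < -g s := by
    rcases (posTime_nonneg h s).eq_or_lt with hc | hc
    · refine ⟨-1, by linarith, fun x hx _ hx' => ?_⟩
      rwa [show x = posTime h s by linarith]
    · obtain ⟨L, hL⟩ := hf.2 _ hc
      have hLle : L ≤ f (posTime h s) := by
        rw [← leftLim_eq_of_tendsto hL]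
        exact hjump _ hc
      have hE := hL.eventually (gt_mem_nhds (hLle.trans_lt hfs))
      obtain ⟨l, hl, hlE⟩ := mem_nhdsLT_iff_exists_Ioo_subset.1 hE
      refine ⟨l, hl, fun x _ hlx hx => ?_⟩
      rcases hx.eq_or_lt with rfl | hx
      · exact hfs
      · exact hlE ⟨hlx, hx⟩
  obtain ⟨l, hl, hfl⟩ := hev
  have hnear := (posTime_continuous h).continuousAt.eventually (lt_mem_nhds hl)
  obtain ⟨ε, hε, hball⟩ := Metric.eventually_nhds_iff.1 hnear
  obtain ⟨r, hr, hrs⟩ := exists_lt_of_lt_csSup ⟨0, hS0⟩ (show s - ε < s by linarith)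
  have hrle : r ≤ s := le_csSup hbdd hr
  have hlr : l < posTime h r := hball (by rw [Real.dist_eq, abs_lt]; constructor <;> linarith)
  have h1 := hfl _ (posTime_nonneg h r) hlr (posTime_mono h hrle)
  have h2 : 0 ≤ h r := hr.2
  rw [hsol.2 r hr.1.1] at h2
  linarith [hg hr.1.1 hs0 hrle]

/-- Comparison of time changes for solutions of `TCE(f¹,g¹)` and `TCE(f²,g²)`
when `f¹ ≤ f²` and `g¹ ≤ g²`. -/
theorem tce_comparison
    (f₁ g₁ h₁ f₂ g₂ h₂ : ℝ → ℝ)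
    (hf₁ : CadlagOn f₁) (hg₁ : CadlagOn g₁)
    (hf₂ : CadlagOn f₂) (hg₂ : CadlagOn g₂)
    (hjump₁ : NonnegJumps f₁) (hjump₂ : NonnegJumps f₂)
    (hgmono₁ : StrictMonoOn g₁ (Ici 0)) (hgmono₂ : StrictMonoOn g₂ (Ici 0))
    (h01 : 0 ≤ f₁ 0 + g₁ 0) (h02 : 0 ≤ f₂ 0 + g₂ 0)
    (hfle : ∀ t : ℝ, 0 ≤ t → f₁ t ≤ f₂ t)
    (hgle : ∀ t : ℝ, 0 ≤ t → g₁ t ≤ g₂ t)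
    (hsol₁ : TCESol f₁ g₁ h₁) (hsol₂ : TCESol f₂ g₂ h₂) :
    ∀ t : ℝ, 0 ≤ t → posTime h₁ t ≤ posTime h₂ t := by
  intro t ht
  by_contra! hlt
  set S : Set ℝ := Icc (0:ℝ) t ∩ {b | posTime h₁ b ≤ posTime h₂ b} with hS
  have hS0 : (0:ℝ) ∈ S := ⟨⟨le_rfl, ht⟩, by simp [posTime_zero]⟩
  have hbdd : BddAbove S := ⟨t, fun x hx => hx.1.2⟩
  have hclosed : IsClosed S :=
    isClosed_Icc.inter (isClosed_le (posTime_continuous h₁) (posTime_continuous h₂))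
  obtain ⟨⟨hσ0, hσt⟩, hσ⟩ : sSup S ∈ S := hclosed.csSup_mem ⟨0, hS0⟩ hbdd
  have hpos : ∀ b ∈ Ioc (sSup S) t, 0 < h₂ b := by
    intro b hb
    have hb0 : 0 ≤ b := hσ0.trans hb.1.le
    have hcb : posTime h₂ b < posTime h₁ b := by
      by_contra! hle
      exact (le_csSup hbdd ⟨⟨hb0, hb.2⟩, hle⟩).not_gt hb.1
    obtain ⟨a, ⟨ha0, hab⟩, ha⟩ : posTime h₂ b ∈ posTime h₁ '' Icc 0 b :=
      intermediate_value_Icc hb0 (posTime_continuous h₁).continuousOn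
        ⟨by rw [posTime_zero]; exact posTime_nonneg _ _, hcb.le⟩
    have hab' : a < b := by
      refine hab.lt_of_ne ?_
      rintro rfl
      exact hcb.ne' ha
    have hh₁ := hsol₁.nonneg hf₁ hjump₁ hgmono₁.monotoneOn h01 ha0
    rw [hsol₁.2 a ha0, ha] at hh₁
    rw [hsol₂.2 b hb0]
    linarith [hgmono₂ ha0 hb0 hab', hgle a ha0, hfle _ (posTime_nonneg h₂ b)]
  have h1 := add_le_posTime_of_pos hσ0 hσt hpos
  have h2 := posTime_le_add h₁ hσt
  have h3 : posTime h₁ (sSup S) ≤ posTime h₂ (sSup S) := hσ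
  linarith
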